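/- Let k ∈ (0,1), α ∈ (0, K(k)), q := e^{−πK'(k)/K(k)}, H(x) := θ₁(πx/(2K(k)); q), Θ(x) := θ₄(πx/(2K(k)); q), β := [1 − 2(1+k)²·sn(α;k)²/(1 + k·sn(α;k)²)²]·Θ(2α)/Θ(0), γ := Θ(2α)/Θ(0). For fixed ξ ∈ ℝ define F(η) := (H(K(k))/Θ(K(k)))·( H(ξ+2α)e^{−2η} + H(ξ−2α)e^{2η} + 2βH(ξ) ) / ( Θ(ξ+2α)e^{−2η} + Θ(ξ−2α)e^{2η} + 2γΘ(ξ) ). Then F(η) → k·sn(ξ − 2α; k) as η → +∞ and F(η) → k·sn(ξ + 2α; k) as η → −∞. In particular, the dark breather approaches translates of the snoidal background, shifted by ∓2α, far from its core. -/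

import Mathlib

noncomputable section

/-- The complete elliptic integral of the first kind. -/
def Kcomp (k : ℝ) : ℝ :=
  ∫ θ in (0 : ℝ)..(Real.pi / 2), (Real.sqrt (1 - k ^ 2 * Real.sin θ ^ 2))⁻¹

/-- The Jacobi theta function `θ₁(y;q) = 2·Σ_{n≥1} (−1)^{n−1} q^{(n−1/2)²} sin((2n−1)y)`
(the sum runs over `n : ℕ`, representing the index `n + 1 ≥ 1`). -/
def theta1R (q y : ℝ) : ℝ :=
  2 * ∑' n : ℕ, (-1 : ℝ) ^ n * q ^ (((n : ℝ) + 1 / 2) ^ 2) *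
    Real.sin ((2 * (n : ℝ) + 1) * y)

/-- The Jacobi theta function `θ₄(y;q) = 1 + 2·Σ_{n≥1} (−1)ⁿ q^{n²} cos(2ny)`
(the sum runs over `n : ℕ`, representing the index `n + 1 ≥ 1`). -/
def theta4R (q y : ℝ) : ℝ :=
  1 + 2 * ∑' n : ℕ, (-1 : ℝ) ^ (n + 1) * q ^ ((n + 1) ^ 2) *
    Real.cos (2 * ((n : ℝ) + 1) * y)

/-- The nome `q = e^{−πK'(k)/K(k)}` with `K'(k) = K(√(1−k²))`. -/
def nome (k : ℝ) : ℝ :=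
  Real.exp (-(Real.pi * Kcomp (Real.sqrt (1 - k ^ 2)) / Kcomp k))

/-- `H(x) = θ₁(πx/(2K(k)); q)`. -/
def Hf (k x : ℝ) : ℝ := theta1R (nome k) (Real.pi * x / (2 * Kcomp k))

/-- `Θ(x) = θ₄(πx/(2K(k)); q)`. -/
def THf (k x : ℝ) : ℝ := theta4R (nome k) (Real.pi * x / (2 * Kcomp k))

/-- The parameter `β` of the dark breather. -/
def betaPar (k : ℝ) (sn : ℝ → ℝ) (α : ℝ) : ℝ :=
  (1 - 2 * (1 + k) ^ 2 * (sn α) ^ 2 / (1 + k * (sn α) ^ 2) ^ 2) * (THf k (2 * α) / THf k 0)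

/-- The parameter `γ` of the dark breather. -/
def gammaPar (k α : ℝ) : ℝ := THf k (2 * α) / THf k 0

/-- The dark-breather profile as a function of `η` at fixed `ξ`. -/
def Fquot (k : ℝ) (sn : ℝ → ℝ) (α ξ η : ℝ) : ℝ :=
  (Hf k (Kcomp k) / THf k (Kcomp k)) *
    (Hf k (ξ + 2 * α) * Real.exp (-(2 * η)) + Hf k (ξ - 2 * α) * Real.exp (2 * η)
      + 2 * betaPar k sn α * Hf k ξ) /
    (THf k (ξ + 2 * α) * Real.exp (-(2 * η)) + THf k (ξ - 2 * α) * Real.exp (2 * η)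
      + 2 * gammaPar k α * THf k ξ)

namespace DB
open Complex

/-- complex theta3 -/
def J3 (τ z : ℂ) : ℂ := jacobiTheta₂ z τ
/-- complex theta4 -/
def J4 (τ z : ℂ) : ℂ := jacobiTheta₂ (z + 1 / 2) τ
/-- complex theta2 -/
def J2 (τ z : ℂ) : ℂ := cexp (Real.pi * I * τ / 4 + Real.pi * I * z) * jacobiTheta₂ (z + τ / 2) τ
/-- complex theta1 -/
def J1 (τ z : ℂ) : ℂ := - J2 τ (z + 1 / 2)

lemma neg_one_zpow_exp (n : ℤ) : cexp (Real.pi * I * n) = (-1 : ℂ) ^ n := by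
  rw [← Complex.exp_pi_mul_I, ← Complex.exp_int_mul]; congr 1; ring

lemma theta_prod (σ : ℂ) (hσ : 0 < σ.im) (u v : ℂ) :
    jacobiTheta₂ (u + v) (2 * σ) * jacobiTheta₂ (u - v) (2 * σ) =
    1 / 2 * (jacobiTheta₂ u σ * jacobiTheta₂ v σ +
      jacobiTheta₂ (u + 1 / 2) σ * jacobiTheta₂ (v + 1 / 2) σ) := by
  have h2 : 0 < (2 * σ).im := by simpa using hσ
  have hs : ∀ z τ : ℂ, 0 < τ.im → Summable fun n : ℤ => ‖jacobiTheta₂_term n z τ‖ :=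
    fun z τ h => ((summable_jacobiTheta₂_term_iff z τ).mpr h).norm
  unfold jacobiTheta₂
  rw [tsum_mul_tsum_of_summable_norm (hs _ _ h2) (hs _ _ h2),
    tsum_mul_tsum_of_summable_norm (hs _ _ hσ) (hs _ _ hσ),
    tsum_mul_tsum_of_summable_norm (hs _ _ hσ) (hs _ _ hσ),
    ← Summable.tsum_add (summable_mul_of_summable_norm (hs _ _ hσ) (hs _ _ hσ))
      (summable_mul_of_summable_norm (hs _ _ hσ) (hs _ _ hσ)), ← tsum_mul_left]
  have key : ∀ p : ℤ × ℤ, 1 / 2 * (jacobiTheta₂_term p.1 u σ * jacobiTheta₂_term p.2 v σ +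
      jacobiTheta₂_term p.1 (u + 1 / 2) σ * jacobiTheta₂_term p.2 (v + 1 / 2) σ) =
      (1 / 2 * (1 + (-1 : ℂ) ^ (p.1 + p.2))) *
        (jacobiTheta₂_term p.1 u σ * jacobiTheta₂_term p.2 v σ) := by
    rintro ⟨p, r⟩
    have h : jacobiTheta₂_term p (u + 1 / 2) σ * jacobiTheta₂_term r (v + 1 / 2) σ =
       (-1 : ℂ) ^ (p + r) * (jacobiTheta₂_term p u σ * jacobiTheta₂_term r v σ) := by
      rw [← neg_one_zpow_exp]
      simp only [jacobiTheta₂_term, ← Complex.exp_add]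
      congr 1; push_cast; ring
    simp only [h]; ring
  simp only [key]
  let g : ℤ × ℤ → ℤ × ℤ := fun p => (p.1 + p.2, p.1 - p.2)
  have hg : Function.Injective g := by
    rintro ⟨a, b⟩ ⟨c, d⟩ h
    simp only [g, Prod.mk.injEq] at h
    ext <;> simp only <;> omega
  rw [← hg.tsum_eq (f := fun p : ℤ × ℤ => (1 / 2 * (1 + (-1 : ℂ) ^ (p.1 + p.2))) *
        (jacobiTheta₂_term p.1 u σ * jacobiTheta₂_term p.2 v σ))]
  · refine tsum_congr ?_
    rintro ⟨m, n⟩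
    have : (-1 : ℂ) ^ (m + n + (m - n)) = 1 := by
      apply Even.neg_one_zpow; exact ⟨m, by ring⟩
    simp only [g, this]
    simp only [jacobiTheta₂_term, ← Complex.exp_add]
    norm_num
    congr 1; ring
  · rintro ⟨p, r⟩ h
    rcases Int.even_or_odd (p + r) with he | ho
    · obtain ⟨m, hm⟩ := he
      refine ⟨(m, p - m), ?_⟩
      simp only [g, Prod.mk.injEq]; constructor <;> omega
    · exfalso; apply h
      simp [ho.neg_one_zpow]

lemma J3_add_one (τ z) : J3 τ (z + 1) = J3 τ z := jacobiTheta₂_add_left z τ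
lemma J3_half (τ z) : J3 τ (z + 1 / 2) = J4 τ z := rfl
lemma J4_half (τ z) : J4 τ (z + 1 / 2) = J3 τ z := by
  rw [J4, show z + 1 / 2 + 1 / 2 = z + 1 by ring]; exact J3_add_one τ z
lemma J2_add_one (τ z) : J2 τ (z + 1) = - J2 τ z := by
  unfold J2
  rw [show z + 1 + τ / 2 = z + τ / 2 + 1 by ring, jacobiTheta₂_add_left,
    show (Real.pi * I * τ / 4 + Real.pi * I * (z + 1) : ℂ) =
      (Real.pi * I * τ / 4 + Real.pi * I * z) + Real.pi * I by ring, Complex.exp_add _ (Real.pi * I),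
      Complex.exp_pi_mul_I]
  ring
lemma J2_half (τ z) : J2 τ (z + 1 / 2) = - J1 τ z := by simp [J1]
lemma J1_half (τ z) : J1 τ (z + 1 / 2) = J2 τ z := by
  rw [J1, show z + 1 / 2 + 1 / 2 = z + 1 by ring, J2_add_one, neg_neg]
lemma J3_neg (τ z) : J3 τ (-z) = J3 τ z := jacobiTheta₂_neg_left z τ
lemma J4_neg (τ z) : J4 τ (-z) = J4 τ z := by
  unfold J4
  rw [← jacobiTheta₂_neg_left, ← jacobiTheta₂_add_left]; congr 1; ring
lemma J2_neg (τ z) : J2 τ (-z) = J2 τ z := by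
  unfold J2
  rw [← jacobiTheta₂_neg_left (-z + τ / 2), show z + τ / 2 = -(-z + τ / 2) + τ by ring,
    jacobiTheta₂_add_left', ← mul_assoc, ← Complex.exp_add]
  congr 2; ring
lemma J1_neg (τ z) : J1 τ (-z) = - J1 τ z := by
  unfold J1
  rw [← J2_neg, neg_neg, show z + 1 / 2 = -(-z + 1/2) + 1 by ring, J2_add_one]
lemma J1_zero (τ) : J1 τ 0 = 0 := by
  have := J1_neg τ 0
  rw [neg_zero] at this
  exact self_eq_neg.mp this

lemma P33 (σ : ℂ) (hσ : 0 < σ.im) (u v : ℂ) : J3 (2 * σ) (u + v) * J3 (2 * σ) (u - v) =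
    1 / 2 * (J3 σ u * J3 σ v + J4 σ u * J4 σ v) := theta_prod σ hσ u v

lemma P44 (σ : ℂ) (hσ : 0 < σ.im) (u v : ℂ) : J4 (2 * σ) (u + v) * J4 (2 * σ) (u - v) =
    1 / 2 * (J4 σ u * J3 σ v + J3 σ u * J4 σ v) := by
  have := P33 σ hσ (u + 1 / 2) v
  rw [J4_half, J3_half, show u + 1 / 2 + v = u + v + 1 / 2 by ring,
    show u + 1 / 2 - v = u - v + 1 / 2 by ring, J3_half, J3_half] at this
  exact this

lemma P22 (σ : ℂ) (hσ : 0 < σ.im) (u v : ℂ) : J2 (2 * σ) (u + v) * J2 (2 * σ) (u - v) =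
    1 / 2 * (J3 σ u * J3 σ v - J4 σ u * J4 σ v) := by
  have h := theta_prod σ hσ (u + σ) v
  rw [jacobiTheta₂_add_left', show u + σ + 1 / 2 = u + 1 / 2 + σ by ring,
    jacobiTheta₂_add_left'] at h
  have e : cexp (-Real.pi * I * (σ + 2 * (u + 1 / 2))) = - cexp (-Real.pi * I * (σ + 2 * u)) := by
    rw [show (-Real.pi * I * (σ + 2 * (u + 1 / 2)) : ℂ) = -Real.pi * I * (σ + 2 * u) + -(Real.pi * I)
      by ring, Complex.exp_add, Complex.exp_neg (Real.pi * I), Complex.exp_pi_mul_I]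
    norm_num
  have e2 : cexp (-Real.pi * I * (σ + 2 * u)) = (cexp (Real.pi * I * (σ + 2 * u)))⁻¹ := by
    rw [← Complex.exp_neg]; congr 1; ring
  rw [e, e2] at h
  have hne := Complex.exp_ne_zero (Real.pi * I * (σ + 2 * u))
  unfold J2 J3 J4
  calc _ = cexp (Real.pi * I * (σ + 2 * u)) *
        (jacobiTheta₂ (u + σ + v) (2 * σ) * jacobiTheta₂ (u + σ - v) (2 * σ)) := by
        rw [show u + v + 2 * σ / 2 = u + σ + v by ring, show u - v + 2 * σ / 2 = u + σ - v by ring,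
          show (Real.pi * I * (σ + 2 * u) : ℂ) =
          (Real.pi * I * (2 * σ) / 4 + Real.pi * I * (u + v)) +
          (Real.pi * I * (2 * σ) / 4 + Real.pi * I * (u - v)) by ring,
          Complex.exp_add (Real.pi * I * (2 * σ) / 4 + Real.pi * I * (u + v))]
        ring
    _ = _ := by rw [h]; field_simp; ring

lemma P11 (σ : ℂ) (hσ : 0 < σ.im) (u v : ℂ) : J1 (2 * σ) (u + v) * J1 (2 * σ) (u - v) =
    1 / 2 * (J4 σ u * J3 σ v - J3 σ u * J4 σ v) := by
  have := P22 σ hσ (u + 1 / 2) v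
  rw [J4_half, J3_half, show u + 1 / 2 + v = u + v + 1 / 2 by ring,
    show u + 1 / 2 - v = u - v + 1 / 2 by ring, J2_half, J2_half] at this
  rw [← this]; ring

lemma P23 (σ : ℂ) (hσ : 0 < σ.im) (u v : ℂ) : J2 (2 * σ) (u + v) * J3 (2 * σ) (u - v) =
    1 / 2 * (J2 σ u * J2 σ v - J1 σ u * J1 σ v) := by
  have h := theta_prod σ hσ (u + σ / 2) (v + σ / 2)
  have e : ∀ z, J1 σ z = - (I * cexp (Real.pi * I * σ / 4 + Real.pi * I * z) *
      jacobiTheta₂ (z + σ / 2 + 1 / 2) σ) := by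
    intro z
    unfold J1 J2
    rw [show (Real.pi * I * σ / 4 + Real.pi * I * (z + 1 / 2) : ℂ) =
      Real.pi / 2 * I + (Real.pi * I * σ / 4 + Real.pi * I * z) by ring,
      Complex.exp_add (Real.pi / 2 * I), Complex.exp_pi_div_two_mul_I,
      show z + 1 / 2 + σ / 2 = z + σ / 2 + 1 / 2 by ring]
  rw [e, e]
  unfold J2 J3
  rw [show u + v + 2 * σ / 2 = u + σ / 2 + (v + σ / 2) by ring,
    show u - v = u + σ / 2 - (v + σ / 2) by ring, mul_assoc, h,
    show (Real.pi * I * (2 * σ) / 4 + Real.pi * I * (u + v) : ℂ) =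
      (Real.pi * I * σ / 4 + Real.pi * I * u) + (Real.pi * I * σ / 4 + Real.pi * I * v) by ring,
      Complex.exp_add (Real.pi * I * σ / 4 + Real.pi * I * u)]
  linear_combination (-1/2) * cexp (Real.pi * I * σ / 4 + Real.pi * I * u) *
    cexp (Real.pi * I * σ / 4 + Real.pi * I * v) * jacobiTheta₂ (u + σ / 2 + 1 / 2) σ *
     jacobiTheta₂ (v + σ / 2 + 1 / 2) σ * (-I_sq)

lemma P14 (σ : ℂ) (hσ : 0 < σ.im) (u v : ℂ) : J1 (2 * σ) (u + v) * J4 (2 * σ) (u - v) =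
    1 / 2 * (J1 σ u * J2 σ v + J2 σ u * J1 σ v) := by
  have := P23 σ hσ (u + 1 / 2) v
  rw [J1_half, J2_half, show u + 1 / 2 + v = u + v + 1 / 2 by ring,
    show u + 1 / 2 - v = u - v + 1 / 2 by ring, J2_half, J3_half] at this
  linear_combination -this

lemma J3_diff (τ : ℂ) (h : 0 < τ.im) : Differentiable ℂ (J3 τ) :=
  fun z => differentiableAt_jacobiTheta₂_fst z h
lemma J4_diff (τ : ℂ) (h : 0 < τ.im) : Differentiable ℂ (J4 τ) :=
  (J3_diff τ h).comp (by fun_prop : Differentiable ℂ fun z : ℂ => z + 1 / 2)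
lemma J2_diff (τ : ℂ) (h : 0 < τ.im) : Differentiable ℂ (J2 τ) := by
  have := (J3_diff τ h).comp (by fun_prop : Differentiable ℂ fun z : ℂ => z + τ / 2)
  exact (by fun_prop : Differentiable ℂ fun z : ℂ => cexp (Real.pi * I * τ / 4 + Real.pi * I * z)).mul
    this
lemma J1_diff (τ : ℂ) (h : 0 < τ.im) : Differentiable ℂ (J1 τ) :=
  ((J2_diff τ h).comp (by fun_prop : Differentiable ℂ fun z : ℂ => z + 1 / 2)).neg

/-- linear relations of squares -/
lemma Q2 (σ : ℂ) (hσ : 0 < σ.im) (z : ℂ) :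
    J4 (2 * σ) 0 ^ 2 * J2 (2 * σ) z ^ 2 =
      J2 (2 * σ) 0 ^ 2 * J4 (2 * σ) z ^ 2 - J3 (2 * σ) 0 ^ 2 * J1 (2 * σ) z ^ 2 := by
  have a := P33 σ hσ z 0
  have b := P22 σ hσ z 0
  have c := P44 σ hσ z 0
  have d := P11 σ hσ z 0
  have a' := P33 σ hσ 0 0
  have b' := P22 σ hσ 0 0
  have c' := P44 σ hσ 0 0
  simp only [add_zero, sub_zero, ← pow_two] at *
  rw [b, c, d, a', b', c']; ring

lemma Q3 (σ : ℂ) (hσ : 0 < σ.im) (z : ℂ) :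
    J4 (2 * σ) 0 ^ 2 * J3 (2 * σ) z ^ 2 =
      J3 (2 * σ) 0 ^ 2 * J4 (2 * σ) z ^ 2 - J2 (2 * σ) 0 ^ 2 * J1 (2 * σ) z ^ 2 := by
  have a := P33 σ hσ z 0
  have b := P22 σ hσ z 0
  have c := P44 σ hσ z 0
  have d := P11 σ hσ z 0
  have a' := P33 σ hσ 0 0
  have b' := P22 σ hσ 0 0
  have c' := P44 σ hσ 0 0
  simp only [add_zero, sub_zero, ← pow_two] at *
  rw [a, c, d, a', b', c']; ring

lemma Q0 (σ : ℂ) (hσ : 0 < σ.im) :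
    J3 (2 * σ) 0 ^ 4 = J2 (2 * σ) 0 ^ 4 + J4 (2 * σ) 0 ^ 4 := by
  have h := Q3 σ hσ (1 / 2)
  have e1 : J3 (2 * σ) (1 / 2) = J4 (2 * σ) 0 := by rw [← J3_half, zero_add]
  have e2 : J4 (2 * σ) (1 / 2) = J3 (2 * σ) 0 := by rw [← J4_half, zero_add]
  have e3 : J1 (2 * σ) (1 / 2) = J2 (2 * σ) 0 := by rw [← J1_half, zero_add]
  rw [e1, e2, e3] at h
  linear_combination -h

lemma even_deriv (f : ℂ → ℂ) (hf : Differentiable ℂ f) (he : ∀ z, f (-z) = f z) :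
    deriv f 0 = 0 := by
  have h1 : HasDerivAt (fun z => f (-z)) (deriv f (-0) * -1) 0 :=
    HasDerivAt.comp (0:ℂ) (hf _).hasDerivAt (hasDerivAt_neg 0)
  have h2 : HasDerivAt (fun z => f (-z)) (deriv f 0) 0 := by
    simp only [he]; exact (hf _).hasDerivAt
  have := h1.unique h2
  rw [neg_zero] at this
  have h3 : deriv f 0 + deriv f 0 = 0 := by linear_combination -this
  exact self_eq_neg.mp (eq_neg_of_add_eq_zero_left h3)

lemma wronsk0 (σ : ℂ) (hσ : 0 < σ.im) (z : ℂ) :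
    J2 σ 0 * (deriv (J1 (2 * σ)) z * J4 (2 * σ) z - J1 (2 * σ) z * deriv (J4 (2 * σ)) z) =
      deriv (J1 σ) 0 * (J2 (2 * σ) z * J3 (2 * σ) z) := by
  have h2 : 0 < (2 * σ).im := by simpa using hσ
  have hp : HasDerivAt (fun s : ℂ => z + s) 1 0 := by simpa using (hasDerivAt_id (0:ℂ)).const_add z
  have hm : HasDerivAt (fun s : ℂ => z - s) (-1) 0 := by simpa using (hasDerivAt_id (0:ℂ)).const_sub z
  have A : HasDerivAt (fun s => J1 (2 * σ) (z + s)) (deriv (J1 (2 * σ)) (z + 0) * 1) 0 :=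
    HasDerivAt.comp (h₂ := J1 (2 * σ)) (0:ℂ) (J1_diff _ h2 _).hasDerivAt hp
  have B : HasDerivAt (fun s => J4 (2 * σ) (z - s)) (deriv (J4 (2 * σ)) (z - 0) * -1) 0 :=
    HasDerivAt.comp (h₂ := J4 (2 * σ)) (0:ℂ) (J4_diff _ h2 _).hasDerivAt hm
  have AB := A.mul B
  have e : ((fun s => J1 (2 * σ) (z + s)) * (fun s => J4 (2 * σ) (z - s))) =
     fun s => 1 / 2 * (J1 σ z * J2 σ s + J2 σ z * J1 σ s) := by
    funext s; exact P14 σ hσ z s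
  rw [e] at AB
  have C : HasDerivAt (fun s => 1 / 2 * (J1 σ z * J2 σ s + J2 σ z * J1 σ s))
     (1 / 2 * (J1 σ z * deriv (J2 σ) 0 + J2 σ z * deriv (J1 σ) 0)) 0 :=
    (((J2_diff σ hσ 0).hasDerivAt.const_mul _).add
      ((J1_diff σ hσ 0).hasDerivAt.const_mul _)).const_mul _
  have := AB.unique C
  rw [even_deriv _ (J2_diff σ hσ) (J2_neg σ)] at this
  have p := P23 σ hσ z 0
  simp only [add_zero, sub_zero, J1_zero, mul_zero] at this p
  rw [p]
  linear_combination J2 σ 0 * this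

end DB
namespace DB
open Complex

/-- real theta1 -/
def h1 (t x : ℝ) : ℝ := theta1R (Real.exp (-(Real.pi * t))) (Real.pi * x)
/-- real theta4 -/
def h4 (t x : ℝ) : ℝ := theta4R (Real.exp (-(Real.pi * t))) (Real.pi * x)

lemma imt {t : ℝ} (ht : 0 < t) : 0 < (I * (t : ℂ)).im := by simpa using ht

lemma sum_split {f : ℤ → ℂ} (hf : Summable f) :
    ∑' n : ℤ, f n = ∑' n : ℕ, (f n + f (-((n : ℤ) + 1))) := by
  have h1 : Summable fun n : ℕ => f n := hf.comp_injective Nat.cast_injective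
  have h2 : Summable fun n : ℕ => f (-((n : ℤ) + 1)) :=
    hf.comp_injective (i := fun n : ℕ => -((n : ℤ) + 1)) (by intro a b h; simpa using h)
  rw [tsum_of_nat_of_neg_add_one h1 h2, h1.tsum_add h2]

lemma sum_split' {f : ℤ → ℂ} (hf : Summable f) :
    ∑' n : ℤ, f n = f 0 + ∑' n : ℕ, (f ((n : ℤ) + 1) + f (-((n : ℤ) + 1))) := by
  have h1 : Summable fun n : ℕ => f n := hf.comp_injective Nat.cast_injective
  have h2 : Summable fun n : ℕ => f (-((n : ℤ) + 1)) :=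
    hf.comp_injective (i := fun n : ℕ => -((n : ℤ) + 1)) (by intro a b h; simpa using h)
  have h3 : Summable fun n : ℕ => f ((n : ℤ) + 1) :=
    hf.comp_injective (i := fun n : ℕ => ((n : ℤ) + 1)) (by intro a b h; simpa using h)
  rw [tsum_of_nat_of_neg_add_one h1 h2, h1.tsum_eq_zero_add, h3.tsum_add h2]
  push_cast
  ring

lemma term4 (t x : ℝ) (n : ℤ) : jacobiTheta₂_term n ((x : ℂ) + 1 / 2) (I * t) =
    (-1 : ℂ) ^ n * (cexp (-(Real.pi * t * n ^ 2)) * cexp (2 * n * (Real.pi * x) * I)) := by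
  rw [← neg_one_zpow_exp, jacobiTheta₂_term, ← Complex.exp_add, ← Complex.exp_add]
  congr 1
  linear_combination (Real.pi * t * n ^ 2) * I_sq

lemma link4 {t : ℝ} (ht : 0 < t) (x : ℝ) : J4 (I * t) x = (h4 t x : ℂ) := by
  unfold J4 h4 theta4R
  rw [jacobiTheta₂, sum_split' ((summable_jacobiTheta₂_term_iff _ _).mpr (imt ht))]
  push_cast
  congr 1
  · simp [jacobiTheta₂_term]
  rw [← tsum_mul_left]
  refine tsum_congr fun n => ?_
  rw [term4, term4, Complex.cos]
  have e1 : ((-1 : ℂ)) ^ ((n : ℤ) + 1) = (-1) ^ (n + 1) := by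
    rw [← zpow_natCast]; push_cast; rfl
  have e2 : ((-1 : ℂ)) ^ (-((n : ℤ) + 1)) = (-1) ^ (n + 1) := by
    rw [zpow_neg, e1, ← inv_pow]; norm_num
  rw [e1, e2, ← Complex.exp_nat_mul]
  push_cast
  have e3 : (((n : ℂ) + 1) ^ 2 * -(Real.pi * t)) = -(Real.pi * t * ((n : ℂ) + 1) ^ 2) := by ring
  rw [e3, neg_sq]
  have e4 : (2 * (-((n : ℂ) + 1)) * (Real.pi * x) * I) = - (2 * ((n : ℂ) + 1) * (Real.pi * x)) * I := by
    ring
  rw [e4]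
  ring

lemma term1 (t x : ℝ) (n : ℤ) :
    cexp (Real.pi * I * (I * t) / 4 + Real.pi * I * (x + 1 / 2)) *
      jacobiTheta₂_term n ((x : ℂ) + 1 / 2 + (I * t) / 2) (I * t) =
    I * (-1 : ℂ) ^ n * (cexp (-(Real.pi * t * (n + 1 / 2) ^ 2)) *
      cexp ((2 * n + 1) * (Real.pi * x) * I)) := by
  have : I * (-1 : ℂ) ^ n = cexp (Real.pi / 2 * I + Real.pi * I * n) := by
    rw [Complex.exp_add, neg_one_zpow_exp, Complex.exp_pi_div_two_mul_I]
  rw [this, jacobiTheta₂_term, ← Complex.exp_add, ← Complex.exp_add, ← Complex.exp_add]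
  congr 1
  linear_combination (Real.pi * t * (n + 1 / 2) ^ 2) * I_sq

lemma link1 {t : ℝ} (ht : 0 < t) (x : ℝ) : J1 (I * t) x = (h1 t x : ℂ) := by
  unfold J1 J2 h1 theta1R
  rw [jacobiTheta₂, ← tsum_mul_left, sum_split]
  swap
  · exact ((summable_jacobiTheta₂_term_iff _ _).mpr (imt ht)).mul_left _
  push_cast
  rw [← tsum_mul_left, ← tsum_neg]
  refine tsum_congr fun n => ?_
  rw [term1, term1, Complex.sin]
  have e1 : ((-1 : ℂ)) ^ ((n : ℤ)) = (-1) ^ n := zpow_natCast _ _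
  have e2 : ((-1 : ℂ)) ^ (-((n : ℤ) + 1)) = - (-1) ^ n := by
    rw [zpow_neg, zpow_add₀ (by norm_num), e1, mul_inv, ← inv_pow]; norm_num
  rw [e1, e2, ← Real.exp_mul]
  push_cast
  have e3 : (-(Real.pi * t) * ((n : ℂ) + 1 / 2) ^ 2) = -(Real.pi * t * ((n : ℂ) + 1 / 2) ^ 2) := by ring
  have e5 : (-(Real.pi * t * (-((n : ℂ) + 1) + 1 / 2) ^ 2)) = -(Real.pi * t * ((n : ℂ) + 1 / 2) ^ 2) := by
    ring
  have e4 : ((2 * (-((n : ℂ) + 1)) + 1) * (Real.pi * x) * I) = - ((2 * (n : ℂ) + 1) * (Real.pi * x)) * I := by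
    ring
  rw [e4, e3, e5]
  ring

/-- real theta3 -/
def h3 (t x : ℝ) : ℝ := h4 t (x + 1 / 2)
/-- real theta2 -/
def h2 (t x : ℝ) : ℝ := h1 t (x + 1 / 2)

lemma link3 {t : ℝ} (ht : 0 < t) (x : ℝ) : J3 (I * t) x = (h3 t x : ℂ) := by
  rw [h3, ← link4 ht, ← J4_half]; push_cast; rfl
lemma link2 {t : ℝ} (ht : 0 < t) (x : ℝ) : J2 (I * t) x = (h2 t x : ℂ) := by
  rw [h2, ← link1 ht, ← J1_half]; push_cast; rfl

/-- derivatives -/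
def d1 (t x : ℝ) : ℝ := (deriv (J1 (I * t)) x).re
/-- derivative of theta4 -/
def d4 (t x : ℝ) : ℝ := (deriv (J4 (I * t)) x).re

lemma real_hd {f : ℂ → ℂ} {g : ℝ → ℝ} (hf : Differentiable ℂ f) (h : ∀ x : ℝ, f x = g x) (x : ℝ) :
    HasDerivAt g (deriv f x).re x ∧ deriv f x = ((deriv f x).re : ℂ) := by
  have a : HasDerivAt (fun y : ℝ => f y) (deriv f x) x :=
    (hf x).hasDerivAt.comp_ofReal
  have b : HasDerivAt g (deriv f x).re x := by
    have := (hf x).hasDerivAt.real_of_complex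
    simpa only [h, ofReal_re] using this
  refine ⟨b, ?_⟩
  have c := b.ofReal_comp
  simp only [h] at a
  exact a.unique c

lemma hd1 {t : ℝ} (ht : 0 < t) (x : ℝ) : HasDerivAt (h1 t) (d1 t x) x :=
  (real_hd (J1_diff _ (imt ht)) (link1 ht) x).1
lemma hd4 {t : ℝ} (ht : 0 < t) (x : ℝ) : HasDerivAt (h4 t) (d4 t x) x :=
  (real_hd (J4_diff _ (imt ht)) (link4 ht) x).1
lemma ld1 {t : ℝ} (ht : 0 < t) (x : ℝ) : deriv (J1 (I * t)) x = d1 t x :=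
  (real_hd (J1_diff _ (imt ht)) (link1 ht) x).2
lemma ld4 {t : ℝ} (ht : 0 < t) (x : ℝ) : deriv (J4 (I * t)) x = d4 t x :=
  (real_hd (J4_diff _ (imt ht)) (link4 ht) x).2

lemma tau_half (t : ℝ) : (I * (t : ℂ)) = 2 * (I * ((t / 2 : ℝ) : ℂ)) := by push_cast; ring

lemma rQ2 {t : ℝ} (ht : 0 < t) (x : ℝ) :
    h4 t 0 ^ 2 * h2 t x ^ 2 = h2 t 0 ^ 2 * h4 t x ^ 2 - h3 t 0 ^ 2 * h1 t x ^ 2 := by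
  have := Q2 (I * ((t / 2 : ℝ) : ℂ)) (imt (half_pos ht)) x
  rw [← tau_half, ← ofReal_zero, link4 ht, link2 ht, link4 ht, link2 ht, link3 ht, link1 ht] at this
  exact_mod_cast this
lemma rQ3 {t : ℝ} (ht : 0 < t) (x : ℝ) :
    h4 t 0 ^ 2 * h3 t x ^ 2 = h3 t 0 ^ 2 * h4 t x ^ 2 - h2 t 0 ^ 2 * h1 t x ^ 2 := by
  have := Q3 (I * ((t / 2 : ℝ) : ℂ)) (imt (half_pos ht)) x
  rw [← tau_half, ← ofReal_zero, link4 ht, link3 ht, link4 ht, link2 ht, link3 ht, link1 ht] at this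
  exact_mod_cast this
lemma rQ0 {t : ℝ} (ht : 0 < t) : h3 t 0 ^ 4 = h2 t 0 ^ 4 + h4 t 0 ^ 4 := by
  have := Q0 (I * ((t / 2 : ℝ) : ℂ)) (imt (half_pos ht))
  rw [← tau_half, ← ofReal_zero, link4 ht, link3 ht, link2 ht] at this
  exact_mod_cast this
lemma rW {t : ℝ} (ht : 0 < t) (x : ℝ) :
    h2 (t / 2) 0 * (d1 t x * h4 t x - h1 t x * d4 t x) = d1 (t / 2) 0 * (h2 t x * h3 t x) := by
  have := wronsk0 (I * ((t / 2 : ℝ) : ℂ)) (imt (half_pos ht)) x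
  rw [← tau_half, ← ofReal_zero, link4 ht, link3 ht, link2 ht, link1 ht, ld1 ht, ld4 ht,
   ld1 (half_pos ht), link2 (half_pos ht)] at this
  exact_mod_cast this
lemma rP23 {t : ℝ} (ht : 0 < t) (x : ℝ) :
    h2 t x * h3 t x = 1 / 2 * (h2 (t / 2) x * h2 (t / 2) 0) := by
  have := P23 (I * ((t / 2 : ℝ) : ℂ)) (imt (half_pos ht)) x 0
  simp only [add_zero, sub_zero, J1_zero, mul_zero] at this
  rw [← tau_half, ← ofReal_zero, link3 ht, link2 ht, 
   link2 (half_pos ht), link2 (half_pos ht)] at this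
  apply ofReal_injective
  push_cast
  exact this
lemma h1_zero {t : ℝ} (ht : 0 < t) : h1 t 0 = 0 := by
  have := link1 ht 0
  rw [ofReal_zero, J1_zero] at this
  exact_mod_cast this.symm
lemma h1_half (t x : ℝ) : h1 t (x + 1 / 2) = h2 t x := rfl
lemma h4_half (t x : ℝ) : h4 t (x + 1 / 2) = h3 t x := rfl
lemma h3_half {t : ℝ} (ht : 0 < t) (x : ℝ) : h3 t (x + 1 / 2) = h4 t x := by
  apply ofReal_injective
  rw [← link4 ht, ← link3 ht, ← J3_half]; push_cast; rfl
lemma h2_half {t : ℝ} (ht : 0 < t) (x : ℝ) : h2 t (x + 1 / 2) = - h1 t x := by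
  apply ofReal_injective
  push_cast
  rw [← link1 ht, ← link2 ht, ← J2_half]; push_cast; rfl

/-- positivity of theta3 -/
lemma h3_pos {t : ℝ} (ht : 0 < t) (x : ℝ) : 0 < h3 t x := by
  have h := link3 ht x
  rw [J3, jacobiTheta₂_functional_equation] at h
  have e0 : -I * (I * (t : ℂ)) = t := by linear_combination (-(t:ℂ)) * I_sq
  have tne : (t : ℂ) ≠ 0 := by exact_mod_cast ht.ne'
  have hI := I_ne_zero
  have e1 : -1 / (I * (t : ℂ)) = I * ((1 / t : ℝ) : ℂ) := by
    push_cast; field_simp; exact I_sq.symm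
  have e2 : -(Real.pi : ℂ) * I * x ^ 2 / (I * t) = ((-(Real.pi * x ^ 2 / t) : ℝ) : ℂ) := by
    push_cast; field_simp
  have e3 : ((t : ℂ)) ^ (1 / 2 : ℂ) = ((t ^ (1 / 2 : ℝ) : ℝ) : ℂ) := by
    rw [ofReal_cpow ht.le]; push_cast; rfl
  have e4 : ∀ n : ℤ, jacobiTheta₂_term n (x / (I * t)) (I * ((1 / t : ℝ) : ℂ)) =
     ((Real.exp (2 * Real.pi * n * x / t - Real.pi * n ^ 2 / t) : ℝ) : ℂ) := by
    intro n
    rw [jacobiTheta₂_term]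
    push_cast
    congr 1
    field_simp
    linear_combination ((n : ℂ)) ^ 2 * I_sq
  have hs := (summable_jacobiTheta₂_term_iff (x / (I * t)) (I * ((1 / t : ℝ) : ℂ))).mpr
    (imt (by positivity))
  simp only [e4] at hs
  rw [e0, e1, e2, e3, jacobiTheta₂, tsum_congr e4, ← ofReal_tsum, ← ofReal_exp] at h
  have hs' := Complex.summable_ofReal.mp hs
  have hp : 0 < ∑' n : ℤ, Real.exp (2 * Real.pi * n * x / t - Real.pi * n ^ 2 / t) :=
    hs'.tsum_pos (fun _ => (Real.exp_pos _).le) 0 (Real.exp_pos _)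
  have h' : h3 t x = 1 / t ^ (1 / 2 : ℝ) * Real.exp (-(Real.pi * x ^ 2 / t)) *
     ∑' n : ℤ, Real.exp (2 * Real.pi * n * x / t - Real.pi * n ^ 2 / t) := by
    apply ofReal_injective
    rw [← h]; push_cast; rfl
  rw [h']
  positivity
lemma h4_pos {t : ℝ} (ht : 0 < t) (x : ℝ) : 0 < h4 t x := by
  rw [← h3_half ht]; exact h3_pos ht _

end DB
namespace DB
open Complex

lemma abs_sin_odd (n : ℕ) (y : ℝ) :
    |Real.sin ((2 * (n : ℝ) + 1) * y)| ≤ (2 * n + 1) * |Real.sin y| := by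
  induction n with
  | zero => simp
  | succ n ih =>
    have e : (2 * ((n + 1 : ℕ) : ℝ) + 1) * y = (2 * (n : ℝ) + 1) * y + 2 * y := by push_cast; ring
    rw [e, Real.sin_add, Real.sin_two_mul]
    have a1 := Real.abs_cos_le_one (2 * y)
    have a2 := Real.abs_cos_le_one ((2 * (n : ℝ) + 1) * y)
    have a3 := Real.abs_cos_le_one y
    have s0 := abs_nonneg (Real.sin y)
    refine (abs_add_le _ _).trans ?_
    rw [abs_mul, abs_mul, abs_mul, abs_mul]
    have b1 : |Real.sin ((2 * (n : ℝ) + 1) * y)| * |Real.cos (2 * y)| ≤ (2 * n + 1) * |Real.sin y| :=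
      (mul_le_of_le_one_right (abs_nonneg _) a1).trans ih
    have b2 : |Real.cos ((2 * (n : ℝ) + 1) * y)| * (|(2:ℝ)| * |Real.sin y| * |Real.cos y|) ≤
        2 * |Real.sin y| := by
      rw [abs_two]
      refine (mul_le_of_le_one_left (by positivity) a2).trans ?_
      exact mul_le_of_le_one_right (by positivity) a3
    push_cast
    linarith

lemma h1_pos_large {t : ℝ} (ht : 1 ≤ t) {x : ℝ} (hx : x ∈ Set.Ioo (0:ℝ) 1) : 0 < h1 t x := by
  have hs : 0 < Real.sin (Real.pi * x) := by
    apply Real.sin_pos_of_pos_of_lt_pi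
    · exact mul_pos Real.pi_pos hx.1
    · nlinarith [Real.pi_pos, hx.2]
  unfold h1 theta1R
  set y := Real.pi * x
  set f : ℕ → ℝ := fun n => (-1 : ℝ) ^ n * (Real.exp (-(Real.pi * t))) ^ (((n : ℝ) + 1 / 2) ^ 2) *
    Real.sin ((2 * (n : ℝ) + 1) * y) with hf
  set A := Real.exp (-(Real.pi * t) / 4) * Real.sin y with hA
  have hApos : 0 < A := by positivity
  have hq : Real.exp (-(Real.pi * t)) ≤ 1 / 12 := by
    have h3 : (3:ℝ) ≤ Real.pi * t := by nlinarith [Real.pi_gt_three]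
    have : Real.exp (-(Real.pi * t)) ≤ Real.exp (-3) := Real.exp_le_exp.mpr (by linarith)
    refine this.trans ?_
    rw [Real.exp_neg, show (3:ℝ) = 1 + 1 + 1 by norm_num, Real.exp_add, Real.exp_add, one_div]
    apply inv_anti₀ (by norm_num)
    nlinarith [Real.exp_one_gt_d9, mul_self_nonneg (Real.exp 1), 
      mul_le_mul Real.exp_one_gt_d9.le Real.exp_one_gt_d9.le (by norm_num) (Real.exp_pos 1).le]
  have hb : ∀ n, |f n| ≤ A * (1 / 4) ^ n := by
    intro n
    simp only [hf]
    rw [abs_mul, abs_mul, abs_pow, abs_neg, abs_one, one_pow, one_mul, ← Real.exp_mul,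
      abs_of_pos (Real.exp_pos _)]
    have i1 := abs_sin_odd n y
    rw [abs_of_pos hs] at i1
    have i2 : Real.exp (-(Real.pi * t) * ((n : ℝ) + 1 / 2) ^ 2) ≤
       Real.exp (-(Real.pi * t) / 4) * (1 / 12) ^ n := by
      calc _ ≤ Real.exp (-(Real.pi * t) / 4 + n * (-(Real.pi * t))) := by
            apply Real.exp_le_exp.mpr
            have : 0 < Real.pi * t := by positivity
            have : 0 ≤ Real.pi * t * (n:ℝ)^2 := by positivity
            nlinarith
        _ = Real.exp (-(Real.pi * t) / 4) * Real.exp (-(Real.pi * t)) ^ n := by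
            rw [Real.exp_add, Real.exp_nat_mul]
        _ ≤ _ := by gcongr
    have i3 : (2 * (n:ℝ) + 1) ≤ 3 ^ n := by
      have := one_add_mul_le_pow (show (-2:ℝ) ≤ 2 by norm_num) n
      norm_num at this
      linarith
    calc _ ≤ (Real.exp (-(Real.pi * t) / 4) * (1 / 12) ^ n) * (3 ^ n * Real.sin y) := by
          refine mul_le_mul i2 (i1.trans ?_) (abs_nonneg _) (by positivity)
          gcongr
      _ = A * ((1 / 12) ^ n * 3 ^ n) := by rw [hA]; ring
      _ = _ := by rw [← mul_pow]; norm_num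
  have hg : Summable fun n : ℕ => A * (1 / 4 : ℝ) ^ n :=
    (summable_geometric_of_lt_one (by norm_num) (by norm_num)).mul_left A
  have hfs : Summable f := hg.of_norm_bounded hb
  have hf1 : Summable fun n => f (n + 1) := (summable_nat_add_iff 1).mpr hfs
  have hg1 : Summable fun n : ℕ => A * (1 / 4 : ℝ) ^ (n + 1) := (summable_nat_add_iff 1).mpr hg
  have hgs : ∑' n : ℕ, A * (1 / 4 : ℝ) ^ (n + 1) = A / 3 := by
    simp_rw [pow_succ]
    rw [tsum_mul_left, tsum_mul_right, tsum_geometric_of_lt_one (by norm_num) (by norm_num)]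
    norm_num; ring
  have h0 : f 0 = A := by
    simp only [hf, hA]
    rw [← Real.exp_mul]; norm_num; left; ring_nf
  have hlow : -(A / 3) ≤ ∑' n, f (n + 1) := by
    rw [← hgs, ← tsum_neg]
    refine Summable.tsum_le_tsum (fun n => ?_) hg1.neg hf1
    exact neg_le_of_abs_le (hb (n + 1))
  rw [hfs.tsum_eq_zero_add, h0]
  linarith

lemma h1_half_nonneg (t : ℝ) : 0 ≤ h2 t 0 := by
  unfold h2 h1 theta1R
  refine mul_nonneg (by norm_num) (tsum_nonneg fun n => ?_)
  have : Real.sin ((2 * (n:ℝ) + 1) * (Real.pi * (0 + 1 / 2))) = (-1) ^ n := by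
    rw [show (2 * (n:ℝ) + 1) * (Real.pi * (0 + 1 / 2)) = Real.pi / 2 + n * Real.pi by ring,
      Real.sin_add_nat_mul_pi]; simp
  rw [this, mul_right_comm, ← mul_pow]
  norm_num
  positivity

lemma h2_pos_aux (n : ℕ) : ∀ t : ℝ, 0 < t → 1 ≤ 2 ^ n * t → ∀ x ∈ Set.Ioo (-(1/2):ℝ) (1/2),
    0 < h2 t x := by
  induction n with
  | zero =>
    intro t _ h x hx
    apply h1_pos_large (by simpa using h)
    constructor <;> linarith [hx.1, hx.2]
  | succ n ih =>
    intro t ht h x hx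
    have ht2 : 0 < 2 * t := by linarith
    have H := ih (2 * t) ht2 (by rw [pow_succ] at h; linarith)
    have e := rP23 ht2
    simp only [mul_div_cancel_left₀ t (two_ne_zero)] at e
    have e0 := e 0
    have p0 := mul_pos (H 0 (by constructor <;> norm_num)) (h3_pos ht2 0)
    have p : 0 < h2 t 0 := by
      rcases (h1_half_nonneg t).eq_or_lt with h | h
      · rw [e0, ← h] at p0; simp at p0
      · exact h
    have px := mul_pos (H x hx) (h3_pos ht2 x)
    rw [e x] at px
    have : 0 < h2 t x * h2 t 0 := by linarith
    exact pos_of_mul_pos_left this p.le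

lemma h2_pos {t : ℝ} (ht : 0 < t) {x : ℝ} (hx : x ∈ Set.Ioo (-(1/2):ℝ) (1/2)) : 0 < h2 t x := by
  obtain ⟨n, hn⟩ := pow_unbounded_of_one_lt (1 / t) (one_lt_two)
  refine h2_pos_aux n t ht ?_ x hx
  rw [div_lt_iff₀ ht] at hn
  exact hn.le

lemma h2_0 {t : ℝ} (ht : 0 < t) : 0 < h2 t 0 := h2_pos ht (by constructor <;> norm_num)

lemma wronsk2 (σ : ℂ) (hσ : 0 < σ.im) (h0 : J2 (2 * σ) 0 ≠ 0) (z : ℂ) :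
    J2 σ 0 * J4 (2 * σ) 0 ^ 2 *
      (deriv (J2 (2 * σ)) z * J4 (2 * σ) z - J2 (2 * σ) z * deriv (J4 (2 * σ)) z) +
      deriv (J1 σ) 0 * J3 (2 * σ) 0 ^ 2 * (J1 (2 * σ) z * J3 (2 * σ) z) = 0 := by
  have h2 : 0 < (2 * σ).im := by simpa using hσ
  have D1 := J1_diff _ h2
  have D2 := J2_diff _ h2
  have D3 := J3_diff _ h2
  have D4 := J4_diff _ h2
  have D2' : Differentiable ℂ (deriv (J2 (2 * σ))) := D2.deriv
  have D4' : Differentiable ℂ (deriv (J4 (2 * σ))) := D4.deriv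
  set M : ℂ → ℂ := fun z => J2 σ 0 * J4 (2 * σ) 0 ^ 2 *
      (deriv (J2 (2 * σ)) z * J4 (2 * σ) z - J2 (2 * σ) z * deriv (J4 (2 * σ)) z) +
      deriv (J1 σ) 0 * J3 (2 * σ) 0 ^ 2 * (J1 (2 * σ) z * J3 (2 * σ) z) with hM
  have DM : Differentiable ℂ M := by
    simp only [hM]; fun_prop
  have key : ∀ z, J2 (2 * σ) z * M z = 0 := by
    intro z
    have L : HasDerivAt (fun z => J4 (2 * σ) 0 ^ 2 * J2 (2 * σ) z ^ 2)
       (J4 (2 * σ) 0 ^ 2 * (2 * J2 (2 * σ) z * deriv (J2 (2 * σ)) z)) z := by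
      have := (((D2 z).hasDerivAt.pow 2).const_mul (J4 (2 * σ) 0 ^ 2))
      simpa using this
    have R : HasDerivAt (fun z => J2 (2 * σ) 0 ^ 2 * J4 (2 * σ) z ^ 2 - J3 (2 * σ) 0 ^ 2 * J1 (2 * σ) z ^ 2)
       (J2 (2 * σ) 0 ^ 2 * (2 * J4 (2 * σ) z * deriv (J4 (2 * σ)) z) -
        J3 (2 * σ) 0 ^ 2 * (2 * J1 (2 * σ) z * deriv (J1 (2 * σ)) z)) z := by
      have := (((D4 z).hasDerivAt.pow 2).const_mul (J2 (2 * σ) 0 ^ 2)).fun_sub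
        (((D1 z).hasDerivAt.pow 2).const_mul (J3 (2 * σ) 0 ^ 2))
      simpa using this
    have e : (fun z => J4 (2 * σ) 0 ^ 2 * J2 (2 * σ) z ^ 2) =
      (fun z => J2 (2 * σ) 0 ^ 2 * J4 (2 * σ) z ^ 2 - J3 (2 * σ) 0 ^ 2 * J1 (2 * σ) z ^ 2) :=
      funext (Q2 σ hσ)
    rw [e] at L
    have u := L.unique R
    have w := wronsk0 σ hσ z
    have q := Q2 σ hσ z
    simp only [hM]
    linear_combination (1/2) * J2 σ 0 * J4 (2 * σ) z * u - J3 (2 * σ) 0 ^ 2 * J1 (2 * σ) z * w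
      - J2 σ 0 * deriv (J4 (2 * σ)) z * q
  have A2 : AnalyticOnNhd ℂ (J2 (2 * σ)) Set.univ := fun z _ => D2.analyticAt z
  have AM : AnalyticOnNhd ℂ M Set.univ := fun z _ => DM.analyticAt z
  rcases AnalyticOnNhd.eq_zero_or_eq_zero_of_mul_eq_zero A2 AM (fun z _ => key z)
    isPreconnected_univ with h | h
  · exact absurd (h 0 (Set.mem_univ _)) h0
  · exact h z (Set.mem_univ _)

/-- real derivatives -/
lemma hd2 {t : ℝ} (ht : 0 < t) (x : ℝ) : HasDerivAt (h2 t) (d1 t (x + 1 / 2)) x := by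
  have := HasDerivAt.comp_add_const x (1/2 : ℝ) (hd1 ht (x + 1 / 2))
  exact this
lemma hd3 {t : ℝ} (ht : 0 < t) (x : ℝ) : HasDerivAt (h3 t) (d4 t (x + 1 / 2)) x := by
  have := HasDerivAt.comp_add_const x (1/2 : ℝ) (hd4 ht (x + 1 / 2))
  exact this
lemma ld2 {t : ℝ} (ht : 0 < t) (x : ℝ) : deriv (J2 (I * t)) x = d1 t (x + 1 / 2) := by
  have := real_hd (J2_diff _ (imt ht)) (link2 ht) x
  rw [this.2, this.1.unique (hd2 ht x)]

lemma rW2 {t : ℝ} (ht : 0 < t) (x : ℝ) :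
    h2 (t / 2) 0 * h4 t 0 ^ 2 * (d1 t (x + 1 / 2) * h4 t x - h2 t x * d4 t x) +
     d1 (t / 2) 0 * h3 t 0 ^ 2 * (h1 t x * h3 t x) = 0 := by
  have := wronsk2 (I * ((t / 2 : ℝ) : ℂ)) (imt (half_pos ht)) (by
    rw [← tau_half, ← ofReal_zero, link2 ht]; exact_mod_cast (h2_0 ht).ne') x
  rw [← tau_half, ← ofReal_zero, link4 ht, link4 ht, link3 ht, link3 ht, link2 ht, link1 ht,
    ld2 ht, ld4 ht, ld1 (half_pos ht), link2 (half_pos ht)] at this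
  exact_mod_cast this

lemma rW3 {t : ℝ} (ht : 0 < t) (x : ℝ) :
    h2 (t / 2) 0 * h4 t 0 ^ 2 * (d4 t (x + 1 / 2) * h4 t x - h3 t x * d4 t x) +
     d1 (t / 2) 0 * h2 t 0 ^ 2 * (h1 t x * h2 t x) = 0 := by
  have L : HasDerivAt (fun z => h4 t 0 ^ 2 * h3 t z ^ 2)
       (h4 t 0 ^ 2 * (2 * h3 t x * d4 t (x + 1 / 2))) x := by
    simpa using (((hd3 ht x).pow 2).const_mul (h4 t 0 ^ 2))
  have R : HasDerivAt (fun z => h3 t 0 ^ 2 * h4 t z ^ 2 - h2 t 0 ^ 2 * h1 t z ^ 2)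
       (h3 t 0 ^ 2 * (2 * h4 t x * d4 t x) - h2 t 0 ^ 2 * (2 * h1 t x * d1 t x)) x := by
    simpa using (((hd4 ht x).pow 2).const_mul (h3 t 0 ^ 2)).fun_sub
        (((hd1 ht x).pow 2).const_mul (h2 t 0 ^ 2))
  have e : (fun z => h4 t 0 ^ 2 * h3 t z ^ 2) =
      (fun z => h3 t 0 ^ 2 * h4 t z ^ 2 - h2 t 0 ^ 2 * h1 t z ^ 2) := funext (rQ3 ht)
  rw [e] at L
  have u := L.unique R
  have w := rW ht x
  have q := rQ3 ht x
  have h3p := h3_pos ht x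
  have : h3 t x * (h2 (t / 2) 0 * h4 t 0 ^ 2 * (d4 t (x + 1 / 2) * h4 t x - h3 t x * d4 t x) +
     d1 (t / 2) 0 * h2 t 0 ^ 2 * (h1 t x * h2 t x)) = 0 := by
    linear_combination (1/2) * h2 (t / 2) 0 * h4 t x * u - h2 t 0 ^ 2 * h1 t x * w
      - h2 (t / 2) 0 * d4 t x * q
  exact (mul_eq_zero.mp this).resolve_left h3p.ne'

/-- the theta quotients -/
def Sn (t x : ℝ) : ℝ := h3 t 0 / h2 t 0 * (h1 t x / h4 t x)
/-- cn -/
def Cn (t x : ℝ) : ℝ := h4 t 0 / h2 t 0 * (h2 t x / h4 t x)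
/-- dn -/
def Dn (t x : ℝ) : ℝ := h4 t 0 / h3 t 0 * (h3 t x / h4 t x)
/-- modulus -/
def kap (t : ℝ) : ℝ := h2 t 0 ^ 2 / h3 t 0 ^ 2
/-- frequency -/
def Om (t : ℝ) : ℝ := h3 t 0 ^ 2 / h4 t 0 ^ 2 * (d1 (t / 2) 0 / h2 (t / 2) 0)

lemma hSn {t : ℝ} (ht : 0 < t) (x : ℝ) : HasDerivAt (Sn t) (Om t * Cn t x * Dn t x) x := by
  have a := h2_0 ht
  have b := h2_0 (half_pos ht)
  have c := h3_pos ht 0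
  have d := h4_pos ht 0
  have e := h4_pos ht x
  have h := ((hd1 ht x).div (hd4 ht x) e.ne').const_mul (h3 t 0 / h2 t 0)
  refine HasDerivAt.congr_deriv h ?_
  have w := rW ht x
  have : d1 t x * h4 t x - h1 t x * d4 t x = d1 (t / 2) 0 * (h2 t x * h3 t x) / h2 (t / 2) 0 := by
    field_simp; linear_combination w
  rw [this]
  unfold Om Cn Dn
  field_simp

lemma hCn {t : ℝ} (ht : 0 < t) (x : ℝ) : HasDerivAt (Cn t) (-(Om t * Sn t x * Dn t x)) x := by
  have a := h2_0 ht
  have b := h2_0 (half_pos ht)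
  have c := h3_pos ht 0
  have d := h4_pos ht 0
  have e := h4_pos ht x
  have h := ((hd2 ht x).div (hd4 ht x) e.ne').const_mul (h4 t 0 / h2 t 0)
  refine HasDerivAt.congr_deriv h ?_
  have w := rW2 ht x
  have : d1 t (x + 1 / 2) * h4 t x - h2 t x * d4 t x =
    - (d1 (t / 2) 0 * h3 t 0 ^ 2 * (h1 t x * h3 t x)) / (h2 (t / 2) 0 * h4 t 0 ^ 2) := by
    rw [eq_div_iff (by positivity)]; linear_combination w
  rw [this]
  unfold Om Sn Dn
  field_simp

lemma hDn {t : ℝ} (ht : 0 < t) (x : ℝ) :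
    HasDerivAt (Dn t) (-(Om t * kap t ^ 2 * Sn t x * Cn t x)) x := by
  have a := h2_0 ht
  have b := h2_0 (half_pos ht)
  have c := h3_pos ht 0
  have d := h4_pos ht 0
  have e := h4_pos ht x
  have h := ((hd3 ht x).div (hd4 ht x) e.ne').const_mul (h4 t 0 / h3 t 0)
  refine HasDerivAt.congr_deriv h ?_
  have w := rW3 ht x
  have : d4 t (x + 1 / 2) * h4 t x - h3 t x * d4 t x =
    - (d1 (t / 2) 0 * h2 t 0 ^ 2 * (h1 t x * h2 t x)) / (h2 (t / 2) 0 * h4 t 0 ^ 2) := by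
    rw [eq_div_iff (by positivity)]; linear_combination w
  rw [this]
  unfold Om Sn Cn kap
  field_simp

lemma Sn_sq_Cn {t : ℝ} (ht : 0 < t) (x : ℝ) : Sn t x ^ 2 + Cn t x ^ 2 = 1 := by
  have a := h2_0 ht
  have e := h4_pos ht x
  have q := rQ2 ht x
  unfold Sn Cn
  field_simp
  linear_combination q
lemma Sn_sq_Dn {t : ℝ} (ht : 0 < t) (x : ℝ) : kap t ^ 2 * Sn t x ^ 2 + Dn t x ^ 2 = 1 := by
  have a := h2_0 ht
  have c := h3_pos ht 0
  have e := h4_pos ht x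
  have q := rQ3 ht x
  unfold Sn Dn kap
  field_simp
  linear_combination q
lemma Sn_zero {t : ℝ} (ht : 0 < t) : Sn t 0 = 0 := by simp [Sn, h1_zero ht]
lemma Cn_zero {t : ℝ} (ht : 0 < t) : Cn t 0 = 1 := by
  have a := h2_0 ht
  have d := h4_pos ht 0
  unfold Cn; field_simp
lemma Dn_zero {t : ℝ} (ht : 0 < t) : Dn t 0 = 1 := by
  have a := h3_pos ht 0
  have d := h4_pos ht 0
  unfold Dn; field_simp
lemma Sn_half {t : ℝ} (ht : 0 < t) : Sn t (1 / 2) = 1 := by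
  have a := h3_pos ht 0
  have d := h2_0 ht
  have e1 : h1 t (1 / 2) = h2 t 0 := by rw [h2, zero_add]
  have e2 : h4 t (1 / 2) = h3 t 0 := by rw [h3, zero_add]
  unfold Sn; rw [e1, e2]; field_simp
lemma Dn_pos {t : ℝ} (ht : 0 < t) (x : ℝ) : 0 < Dn t x := by
  have a := h3_pos ht 0
  have b := h3_pos ht x
  have c := h4_pos ht x
  have d := h4_pos ht 0
  unfold Dn; positivity
lemma Cn_pos {t : ℝ} (ht : 0 < t) {x : ℝ} (hx : x ∈ Set.Ioo (-(1/2):ℝ) (1/2)) : 0 < Cn t x := by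
  have a := h2_0 ht
  have b := h2_pos ht hx
  have c := h4_pos ht x
  have d := h4_pos ht 0
  unfold Cn; positivity
lemma kap_mem {t : ℝ} (ht : 0 < t) : kap t ∈ Set.Ioo (0:ℝ) 1 := by
  have a := h2_0 ht
  have c := h3_pos ht 0
  have d := h4_pos ht 0
  have q := rQ0 ht
  refine ⟨by unfold kap; positivity, ?_⟩
  unfold kap
  rw [div_lt_one (by positivity)]
  have : 0 < h4 t 0 ^ 4 := by positivity
  by_contra h
  push Not at h
  have := pow_le_pow_left₀ (by positivity) h 2
  nlinarith
end DB
namespace DB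
open Complex

lemma mod3 {t : ℝ} (ht : 0 < t) (z : ℂ) : jacobiTheta₂ z (I * ((1 / t : ℝ) : ℂ)) =
    (Real.sqrt t : ℂ) * cexp (-(Real.pi * t * z ^ 2)) * jacobiTheta₂ (I * t * z) (I * t) := by
  have tne : (t : ℂ) ≠ 0 := by exact_mod_cast ht.ne'
  have hI := I_ne_zero
  have e0 : -I * (I * ((1 / t : ℝ) : ℂ)) = ((1 / t : ℝ) : ℂ) := by
    linear_combination (-((1 / t : ℝ) : ℂ)) * I_sq
  have e1 : -1 / (I * ((1 / t : ℝ) : ℂ)) = I * t := by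
    push_cast; field_simp; exact I_sq.symm
  have e2 : -(Real.pi : ℂ) * I * z ^ 2 / (I * ((1 / t : ℝ) : ℂ)) = -(Real.pi * t * z ^ 2) := by
    push_cast; field_simp
  have e3 : 1 / (((1 / t : ℝ) : ℂ)) ^ (1 / 2 : ℂ) = (Real.sqrt t : ℂ) := by
    have : (((1 / t : ℝ) : ℂ)) ^ (1 / 2 : ℂ) = (((1 / t) ^ (1 / 2 : ℝ) : ℝ) : ℂ) := by
      rw [ofReal_cpow (by positivity)]; push_cast; rfl
    rw [this, ← Real.sqrt_eq_rpow, Real.sqrt_div zero_le_one, Real.sqrt_one]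
    push_cast; rw [one_div_one_div]
  have e4 : z / (I * ((1 / t : ℝ) : ℂ)) = -(I * t * z) := by
    push_cast; field_simp; linear_combination z * I_sq
  rw [jacobiTheta₂_functional_equation, e0, e1, e2, e3, e4, jacobiTheta₂_neg_left]

lemma modJ4 {t : ℝ} (ht : 0 < t) : J4 (I * ((1 / t : ℝ) : ℂ)) 0 =
    (Real.sqrt t : ℂ) * J2 (I * t) 0 := by
  rw [J4, mod3 ht, J2, mul_assoc]
  congr 1
  rw [show I * t * (0 + 1 / 2) = 0 + I * t / 2 by ring]
  congr 2
  linear_combination (-(Real.pi * t / 4 : ℂ)) * I_sq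

lemma modJ1 {t : ℝ} (ht : 0 < t) (z : ℂ) : J1 (I * ((1 / t : ℝ) : ℂ)) z =
    (-I * Real.sqrt t * cexp (-(Real.pi * t * z ^ 2))) * J1 (I * t) (I * t * z) := by
  have tne : (t : ℂ) ≠ 0 := by exact_mod_cast ht.ne'
  rw [J1, J2, mod3 ht, J1, J2]
  have e : I * (t : ℂ) * (z + 1 / 2 + I * ((1 / t : ℝ) : ℂ) / 2) + 1 =
     I * t * z + 1 / 2 + I * t / 2 := by
    push_cast; field_simp; linear_combination I_sq
  rw [← e, jacobiTheta₂_add_left]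
  have e2 : cexp (Real.pi * I * (I * ((1 / t : ℝ) : ℂ)) / 4 + Real.pi * I * (z + 1 / 2)) *
      cexp (-(Real.pi * t * (z + 1 / 2 + I * ((1 / t : ℝ) : ℂ) / 2) ^ 2)) =
      -I * cexp (-(Real.pi * t * z ^ 2)) *
      cexp (Real.pi * I * (I * t) / 4 + Real.pi * I * (I * t * z + 1 / 2)) := by
    have : -I = cexp (-(Real.pi / 2 * I)) := by
      rw [Complex.exp_neg, Complex.exp_pi_div_two_mul_I, inv_I]
    rw [this, ← Complex.exp_add, ← Complex.exp_add, ← Complex.exp_add]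
    congr 1
    push_cast
    field_simp
    linear_combination (-4 * (t:ℂ)^2 - 16 * t^2 * z) * I_sq
  linear_combination (-(Real.sqrt t : ℂ)) *
    jacobiTheta₂ (I * (t : ℂ) * (z + 1 / 2 + I * ((1 / t : ℝ) : ℂ) / 2)) (I * t) * e2

lemma mh3 {t : ℝ} (ht : 0 < t) : h3 (1 / t) 0 = Real.sqrt t * h3 t 0 := by
  have := mod3 ht 0
  have a := link3 (one_div_pos.mpr ht) 0
  have b := link3 ht 0
  rw [ofReal_zero] at a b
  unfold J3 at a b
  rw [mul_zero, a, b] at this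
  norm_num at this
  rw [one_div]
  exact_mod_cast this

lemma mh4 {t : ℝ} (ht : 0 < t) : h4 (1 / t) 0 = Real.sqrt t * h2 t 0 := by
  have := modJ4 ht
  rw [← ofReal_zero, link4 (one_div_pos.mpr ht) 0, link2 ht 0] at this
  exact_mod_cast this

lemma mh2 {t : ℝ} (ht : 0 < t) : h2 (1 / t) 0 = Real.sqrt t * h4 t 0 := by
  have := mh4 (one_div_pos.mpr ht)
  rw [one_div_one_div] at this
  rw [this, Real.sqrt_div zero_le_one, Real.sqrt_one]
  have := Real.sqrt_pos.mpr ht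
  field_simp

lemma md1 {t : ℝ} (ht : 0 < t) : d1 (1 / t) 0 = t * Real.sqrt t * d1 t 0 := by
  have a := ld1 (one_div_pos.mpr ht) 0
  have b := ld1 ht 0
  have D := J1_diff _ (imt ht)
  rw [ofReal_zero] at a b
  have e : J1 (I * ((1 / t : ℝ) : ℂ)) = fun z => (-I * Real.sqrt t * cexp (-(Real.pi * t * z ^ 2))) *
    J1 (I * t) (I * t * z) := funext (modJ1 ht)
  have hl : HasDerivAt (fun z : ℂ => I * (t:ℂ) * z) (I * t) 0 := by
    simpa using (hasDerivAt_id (0:ℂ)).const_mul (I * (t:ℂ))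
  have h1 : HasDerivAt (fun z : ℂ => J1 (I * t) (I * t * z)) (deriv (J1 (I * t)) (I * t * 0) * (I * t)) 0 :=
    HasDerivAt.comp (h₂ := J1 (I * t)) (0:ℂ) (D _).hasDerivAt hl
  have h2 : DifferentiableAt ℂ (fun z : ℂ => (-I * Real.sqrt t * cexp (-(Real.pi * t * z ^ 2)))) 0 := by
    fun_prop
  have h3 := h2.hasDerivAt.fun_mul h1
  rw [← e] at h3
  have h4 := h3.deriv
  rw [a, mul_zero, b, J1_zero] at h4
  norm_num at h4
  rw [one_div]
  apply ofReal_injective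
  rw [h4]; push_cast
  linear_combination (-(Real.sqrt t : ℂ) * d1 t 0 * t) * I_sq

lemma Om_eq {t : ℝ} (ht : 0 < t) : Om t = h3 t 0 * d1 t 0 / (h2 t 0 * h4 t 0) := by
  have a := h2_0 ht
  have b := h2_0 (half_pos ht)
  have c := h3_pos ht 0
  have d := h4_pos ht 0
  have w := rW ht 0
  rw [h1_zero ht, zero_mul, sub_zero] at w
  unfold Om
  field_simp
  linear_combination -w

lemma Om_mod {t : ℝ} (ht : 0 < t) : Om (1 / t) = t * Om t := by
  have a := h2_0 ht
  have c := h3_pos ht 0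
  have d := h4_pos ht 0
  have s := Real.sqrt_pos.mpr ht
  rw [Om_eq (one_div_pos.mpr ht), Om_eq ht, mh2 ht, mh3 ht, mh4 ht, md1 ht]
  field_simp

lemma kap_mod {t : ℝ} (ht : 0 < t) : kap (1 / t) = Real.sqrt (1 - kap t ^ 2) := by
  have a := h2_0 ht
  have c := h3_pos ht 0
  have d := h4_pos ht 0
  have s := Real.sqrt_pos.mpr ht
  have q := rQ0 ht
  symm
  rw [Real.sqrt_eq_iff_mul_self_eq_of_pos (kap_mem (one_div_pos.mpr ht)).1]
  unfold kap
  rw [mh2 ht, mh3 ht]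
  field_simp
  linear_combination -q

/-- integrand -/
def ig (k θ : ℝ) : ℝ := (Real.sqrt (1 - k ^ 2 * Real.sin θ ^ 2))⁻¹

lemma ig_arg {k : ℝ} (hk : k ∈ Set.Ioo (0:ℝ) 1) (θ : ℝ) : 0 < 1 - k ^ 2 * Real.sin θ ^ 2 := by
  have h1 : k ^ 2 < 1 := by nlinarith [hk.1, hk.2]
  have h2 := Real.sin_sq_le_one θ
  nlinarith [sq_nonneg (Real.sin θ), sq_nonneg k]

lemma ig_cont {k : ℝ} (hk : k ∈ Set.Ioo (0:ℝ) 1) : Continuous (ig k) := by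
  unfold ig
  refine Continuous.inv₀ (by fun_prop) fun θ => (Real.sqrt_pos.mpr (ig_arg hk θ)).ne'

lemma ig_pos {k : ℝ} (hk : k ∈ Set.Ioo (0:ℝ) 1) (θ : ℝ) : 0 < ig k θ :=
  inv_pos.mpr (Real.sqrt_pos.mpr (ig_arg hk θ))

lemma K_pos {k : ℝ} (hk : k ∈ Set.Ioo (0:ℝ) 1) : 0 < Kcomp k :=
  intervalIntegral.intervalIntegral_pos_of_pos ((ig_cont hk).intervalIntegrable _ _) (ig_pos hk)
    (by positivity)

lemma K_mono {k l : ℝ} (hk : k ∈ Set.Ioo (0:ℝ) 1) (hl : l ∈ Set.Ioo (0:ℝ) 1) (h : k < l) :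
    Kcomp k < Kcomp l := by
  have hsq : k ^ 2 < l ^ 2 := by nlinarith [hk.1]
  refine intervalIntegral.integral_lt_integral_of_continuousOn_of_le_of_exists_lt (by positivity)
    (ig_cont hk).continuousOn (ig_cont hl).continuousOn ?_ ⟨Real.pi / 2, ?_, ?_⟩
  · intro θ _
    refine inv_anti₀ (Real.sqrt_pos.mpr (ig_arg hl θ)) (Real.sqrt_le_sqrt ?_)
    nlinarith [sq_nonneg (Real.sin θ)]
  · exact ⟨by positivity, le_rfl⟩
  · refine inv_strictAnti₀ (Real.sqrt_pos.mpr (ig_arg hl _)) (Real.sqrt_lt_sqrt (ig_arg hl _).le ?_)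
    rw [Real.sin_pi_div_two]; linarith

lemma compl_mem {k : ℝ} (hk : k ∈ Set.Ioo (0:ℝ) 1) : Real.sqrt (1 - k ^ 2) ∈ Set.Ioo (0:ℝ) 1 := by
  have := hk.1
  have := hk.2
  refine ⟨Real.sqrt_pos.mpr (by nlinarith), ?_⟩
  rw [Real.sqrt_lt' one_pos]; nlinarith

lemma ratio_anti {k l : ℝ} (hk : k ∈ Set.Ioo (0:ℝ) 1) (hl : l ∈ Set.Ioo (0:ℝ) 1) (h : k < l) :
    Kcomp (Real.sqrt (1 - l ^ 2)) / Kcomp l < Kcomp (Real.sqrt (1 - k ^ 2)) / Kcomp k := by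
  have h1 := K_mono hk hl h
  have h2 : Kcomp (Real.sqrt (1 - l ^ 2)) < Kcomp (Real.sqrt (1 - k ^ 2)) := by
    refine K_mono (compl_mem hl) (compl_mem hk) (Real.sqrt_lt_sqrt ?_ ?_)
    · nlinarith [hl.1, hl.2]
    · nlinarith [hk.1]
  have := K_pos hk
  have := K_pos (compl_mem hl)
  have := K_pos (compl_mem hk)
  exact div_lt_div₀ h2 h1.le this.le (K_pos hk)

lemma ratio_inj {k l : ℝ} (hk : k ∈ Set.Ioo (0:ℝ) 1) (hl : l ∈ Set.Ioo (0:ℝ) 1)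
    (h : Kcomp (Real.sqrt (1 - l ^ 2)) / Kcomp l = Kcomp (Real.sqrt (1 - k ^ 2)) / Kcomp k) :
    k = l := by
  rcases lt_trichotomy k l with g | g | g
  · exact absurd h (ratio_anti hk hl g).ne
  · exact g
  · exact absurd h (ratio_anti hl hk g).ne'

lemma K_theta {t : ℝ} (ht : 0 < t) : Kcomp (kap t) = Om t / 2 := by
  have hk := kap_mem ht
  set G : ℝ → ℝ := fun φ => ∫ θ in (0:ℝ)..φ, ig (kap t) θ with hG
  have dG : ∀ φ, HasDerivAt G (ig (kap t) φ) φ := fun φ =>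
    ((ig_cont hk).integral_hasStrictDerivAt 0 φ).hasDerivAt
  have cG : Continuous G := continuous_iff_continuousAt.mpr fun φ => (dG φ).continuousAt
  have cS : Continuous (Sn t) := continuous_iff_continuousAt.mpr fun φ => (hSn ht φ).continuousAt
  obtain ⟨c, hc, e⟩ := exists_hasDerivAt_eq_slope (fun x => G (Real.arcsin (Sn t x))) (fun _ => Om t)
    (show (0:ℝ) < 1 / 2 by norm_num)
    (cG.comp (Real.continuous_arcsin.comp cS)).continuousOn (by
      intro x hx
      have hC : 0 < Cn t x := Cn_pos ht ⟨by linarith [hx.1], hx.2⟩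
      have hD := Dn_pos ht x
      have q := Sn_sq_Cn ht x
      have q' := Sn_sq_Dn ht x
      have hlt : Sn t x ^ 2 < 1 := by nlinarith
      have n1 : Sn t x ≠ -1 := by intro h; rw [h] at hlt; norm_num at hlt
      have n2 : Sn t x ≠ 1 := by intro h; rw [h] at hlt; norm_num at hlt
      have hab : -1 ≤ Sn t x ∧ Sn t x ≤ 1 := by constructor <;> nlinarith
      have d1 := (Real.hasDerivAt_arcsin n1 n2).comp x (hSn ht x)
      have d2 := (dG (Real.arcsin (Sn t x))).comp x d1
      refine HasDerivAt.congr_deriv d2 ?_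
      have r1 : Real.sqrt (1 - Sn t x ^ 2) = Cn t x := by
        rw [show 1 - Sn t x ^ 2 = Cn t x ^ 2 by linarith, Real.sqrt_sq hC.le]
      have r2 : ig (kap t) (Real.arcsin (Sn t x)) = (Dn t x)⁻¹ := by
        rw [ig, Real.sin_arcsin hab.1 hab.2, show 1 - kap t ^ 2 * Sn t x ^ 2 = Dn t x ^ 2 by linarith,
          Real.sqrt_sq hD.le]
      rw [r1, r2]
      field_simp)
  have g0 : G 0 = 0 := by simp [hG]
  have g1 : G (Real.pi / 2) = Kcomp (kap t) := rfl
  simp only [Sn_half ht, Sn_zero ht, Real.arcsin_one, Real.arcsin_zero, g0, g1] at e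
  rw [e]; ring

lemma uniq (k : ℝ) (f g : ℝ → ℝ × ℝ × ℝ)
    (hf : ∀ x, HasDerivAt f ((f x).2.1 * (f x).2.2, -((f x).1 * (f x).2.2), -(k ^ 2 * (f x).1 * (f x).2.1)) x)
    (hg : ∀ x, HasDerivAt g ((g x).2.1 * (g x).2.2, -((g x).1 * (g x).2.2), -(k ^ 2 * (g x).1 * (g x).2.1)) x)
    (bf : ∀ x, f x ∈ Metric.closedBall (0 : ℝ × ℝ × ℝ) 1)
    (bg : ∀ x, g x ∈ Metric.closedBall (0 : ℝ × ℝ × ℝ) 1) (h0 : f 0 = g 0) : f = g := by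
  let v : ℝ × ℝ × ℝ → ℝ × ℝ × ℝ := fun p => (p.2.1 * p.2.2, -(p.1 * p.2.2), -(k ^ 2 * p.1 * p.2.1))
  have hv : ContDiff ℝ 1 v := by fun_prop
  obtain ⟨L, hL⟩ := (hv.locallyLipschitz.locallyLipschitzOn (s := Metric.closedBall 0 1)).exists_lipschitzOnWith_of_compact
    (isCompact_closedBall (0 : ℝ × ℝ × ℝ) 1)
  exact ODE_solution_unique_univ (v := fun _ => v) (s := fun _ => Metric.closedBall 0 1) (t₀ := 0)
    (fun _ => hL) (fun x => ⟨hf x, bf x⟩) (fun x => ⟨hg x, bg x⟩) h0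

lemma ball_mem {k s c d : ℝ} (h1 : s ^ 2 + c ^ 2 = 1) (h2 : k ^ 2 * s ^ 2 + d ^ 2 = 1) :
    (s, c, d) ∈ Metric.closedBall (0 : ℝ × ℝ × ℝ) 1 := by
  rw [mem_closedBall_zero_iff, Prod.norm_def, Prod.norm_def]
  simp only [Real.norm_eq_abs, sup_le_iff]
  refine ⟨?_, ?_, ?_⟩ <;> rw [← sq_le_one_iff_abs_le_one]
  · nlinarith [sq_nonneg c]
  · nlinarith [sq_nonneg s]
  · nlinarith [mul_nonneg (sq_nonneg k) (sq_nonneg s)]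

lemma sn_eq {t : ℝ} (ht : 0 < t) (sn cn dn : ℝ → ℝ)
    (hsn : ∀ x, HasDerivAt sn (cn x * dn x) x)
    (hcn : ∀ x, HasDerivAt cn (-(sn x * dn x)) x)
    (hdn : ∀ x, HasDerivAt dn (-((kap t) ^ 2 * sn x * cn x)) x)
    (hsn0 : sn 0 = 0) (hcn0 : cn 0 = 1) (hdn0 : dn 0 = 1) (x : ℝ) :
    sn x = Sn t (x / Om t) := by
  have hO : 0 < Om t := by
    have := K_theta ht
    have := K_pos (kap_mem ht)
    linarith
  have i1 : ∀ x, sn x ^ 2 + cn x ^ 2 = 1 := by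
    have hd : ∀ x, HasDerivAt (fun x => sn x ^ 2 + cn x ^ 2) 0 x := by
      intro x
      refine HasDerivAt.congr_deriv (((hsn x).fun_pow 2).fun_add ((hcn x).fun_pow 2)) ?_
      push_cast; ring
    intro x
    have := is_const_of_deriv_eq_zero (fun x => (hd x).differentiableAt) (fun x => (hd x).deriv) x 0
    simpa [hsn0, hcn0] using this
  have i2 : ∀ x, kap t ^ 2 * sn x ^ 2 + dn x ^ 2 = 1 := by
    have hd : ∀ x, HasDerivAt (fun x => kap t ^ 2 * sn x ^ 2 + dn x ^ 2) 0 x := by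
      intro x
      refine HasDerivAt.congr_deriv ((((hsn x).fun_pow 2).const_mul _).fun_add ((hdn x).fun_pow 2)) ?_
      push_cast; ring
    intro x
    have := is_const_of_deriv_eq_zero (fun x => (hd x).differentiableAt) (fun x => (hd x).deriv) x 0
    simpa [hsn0, hdn0] using this
  have sc : ∀ {F : ℝ → ℝ} {F' x : ℝ}, HasDerivAt F (Om t * F') (x / Om t) →
      HasDerivAt (fun x => F (x / Om t)) F' x := by
    intro F F' x h
    have hl : HasDerivAt (fun x : ℝ => x / Om t) (1 / Om t) x := (hasDerivAt_id x).div_const _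
    refine HasDerivAt.congr_deriv (HasDerivAt.comp (h₂ := F) x h hl) ?_
    field_simp
  have := uniq (kap t) (fun x => (sn x, cn x, dn x))
    (fun x => (Sn t (x / Om t), Cn t (x / Om t), Dn t (x / Om t)))
    (fun x => (hsn x).prodMk ((hcn x).prodMk (hdn x)))
    (fun x => (sc (by simpa only [mul_assoc] using hSn ht (x / Om t))).prodMk
      ((sc (HasDerivAt.congr_deriv (hCn ht (x / Om t)) (by ring))).prodMk
       (sc (HasDerivAt.congr_deriv (hDn ht (x / Om t)) (by ring)))))
    (fun x => ball_mem (i1 x) (i2 x))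
    (fun x => ball_mem (Sn_sq_Cn ht _) (Sn_sq_Dn ht _))
    (by simp [hsn0, hcn0, hdn0, Sn_zero ht, Cn_zero ht, Dn_zero ht])
  have := congrFun this x
  simp only [Prod.mk.injEq] at this
  exact this.1

lemma main_quot (k : ℝ) (hk : k ∈ Set.Ioo (0 : ℝ) 1)
    (sn cn dn : ℝ → ℝ)
    (hsn : ∀ x, HasDerivAt sn (cn x * dn x) x)
    (hcn : ∀ x, HasDerivAt cn (-(sn x * dn x)) x)
    (hdn : ∀ x, HasDerivAt dn (-(k ^ 2 * sn x * cn x)) x)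
    (hsn0 : sn 0 = 0) (hcn0 : cn 0 = 1) (hdn0 : dn 0 = 1) :
    (∀ x, 0 < THf k x) ∧ ∀ x, k * sn x = (Hf k (Kcomp k) / THf k (Kcomp k)) * Hf k x / THf k x := by
  have hK := K_pos hk
  have hK' := K_pos (compl_mem hk)
  obtain ⟨t, htdef⟩ : ∃ t, t = Kcomp (Real.sqrt (1 - k ^ 2)) / Kcomp k := ⟨_, rfl⟩
  have ht : 0 < t := by rw [htdef]; positivity
  have hkt : k = kap t := by
    apply ratio_inj hk (kap_mem ht)
    have hO := K_theta ht
    have hp := K_pos (kap_mem ht)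
    rw [← kap_mod ht, K_theta (one_div_pos.mpr ht), Om_mod ht, ← htdef, hO]
    rw [hO] at hp
    have hO' : Om t ≠ 0 := fun h => by rw [h] at hp; norm_num at hp
    field_simp
  have hn : nome k = Real.exp (-(Real.pi * t)) := by rw [nome, htdef, mul_div_assoc]
  have eH : ∀ x, Hf k x = h1 t (x / (2 * Kcomp k)) := fun x => by
    rw [Hf, hn, h1, mul_div_assoc]
  have eT : ∀ x, THf k x = h4 t (x / (2 * Kcomp k)) := fun x => by
    rw [THf, hn, h4, mul_div_assoc]
  refine ⟨fun x => by rw [eT]; exact h4_pos ht _, fun x => ?_⟩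
  have hO : Om t = 2 * Kcomp k := by
    have := K_theta ht
    rw [← hkt] at this; linarith
  have hs := sn_eq ht sn cn dn hsn hcn (by rw [← hkt]; exact hdn) hsn0 hcn0 hdn0 x
  rw [hs, hO, eH, eT, eH, eT]
  have e : Kcomp k / (2 * Kcomp k) = 0 + 1 / 2 := by field_simp; norm_num
  rw [e, h1_half, h4_half]
  generalize x / (2 * Kcomp k) = y
  rw [hkt]
  unfold kap Sn
  have a := h2_0 ht
  have b := h3_pos ht 0
  have c := h4_pos ht y
  field_simp

lemma lim_aux (c A B C A' B' C' : ℝ) (hB : 0 < B') :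
    Filter.Tendsto (fun η : ℝ => c * (A * Real.exp (-(2 * η)) + B * Real.exp (2 * η) + C) /
      (A' * Real.exp (-(2 * η)) + B' * Real.exp (2 * η) + C')) Filter.atTop (nhds (c * B / B')) := by
  have h1 : Filter.Tendsto (fun η : ℝ => Real.exp (-(2 * η))) Filter.atTop (nhds 0) :=
    Real.tendsto_exp_neg_atTop_nhds_zero.comp
      (Filter.tendsto_id.const_mul_atTop (two_pos : (0:ℝ) < 2))
  have N := ((((h1.mul h1).const_mul A).add_const B).add (h1.const_mul C)).const_mul c
  have D := ((((h1.mul h1).const_mul A').add_const B').add (h1.const_mul C'))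
  have Q := N.div D (by simpa using hB.ne')
  simp only [mul_zero, zero_add, add_zero] at Q
  refine Q.congr fun η => ?_
  have hp := Real.exp_pos (2 * η)
  have e : Real.exp (-(2 * η)) = (Real.exp (2 * η))⁻¹ := Real.exp_neg _
  have hx : (Real.exp (2 * η))⁻¹ ≠ 0 := by positivity
  simp only [Pi.div_apply]
  rw [e]
  rw [show c * (A * ((Real.exp (2 * η))⁻¹ * (Real.exp (2 * η))⁻¹) + B + C * (Real.exp (2 * η))⁻¹) =
      (c * (A * (Real.exp (2 * η))⁻¹ + B * Real.exp (2 * η) + C)) * (Real.exp (2 * η))⁻¹ by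
        field_simp,
     show (A' * ((Real.exp (2 * η))⁻¹ * (Real.exp (2 * η))⁻¹) + B' + C' * (Real.exp (2 * η))⁻¹) =
      (A' * (Real.exp (2 * η))⁻¹ + B' * Real.exp (2 * η) + C') * (Real.exp (2 * η))⁻¹ by
        field_simp, mul_div_mul_right _ _ hx]

end DB

/-- Far from its core the dark breather approaches translates of the snoidal background:
`F(η) → k·sn(ξ − 2α; k)` as `η → +∞` and `F(η) → k·sn(ξ + 2α; k)` as `η → −∞`. -/
theorem dark_breather_asymptotics
    (k : ℝ) (hk : k ∈ Set.Ioo (0 : ℝ) 1)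
    (sn cn dn : ℝ → ℝ)
    (hsn : ∀ x, HasDerivAt sn (cn x * dn x) x)
    (hcn : ∀ x, HasDerivAt cn (-(sn x * dn x)) x)
    (hdn : ∀ x, HasDerivAt dn (-(k ^ 2 * sn x * cn x)) x)
    (hsn0 : sn 0 = 0) (hcn0 : cn 0 = 1) (hdn0 : dn 0 = 1)
    (α : ℝ) (hα : α ∈ Set.Ioo 0 (Kcomp k)) (ξ : ℝ) :
    Filter.Tendsto (Fquot k sn α ξ) Filter.atTop (nhds (k * sn (ξ - 2 * α))) ∧
    Filter.Tendsto (Fquot k sn α ξ) Filter.atBot (nhds (k * sn (ξ + 2 * α))) := by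
  obtain ⟨hT, hq⟩ := DB.main_quot k hk sn cn dn hsn hcn hdn hsn0 hcn0 hdn0
  constructor
  · rw [hq]
    exact DB.lim_aux _ _ _ _ _ _ _ (hT _)
  · rw [hq]
    have h := (DB.lim_aux (Hf k (Kcomp k) / THf k (Kcomp k)) (Hf k (ξ - 2 * α)) (Hf k (ξ + 2 * α))
      (2 * betaPar k sn α * Hf k ξ) (THf k (ξ - 2 * α)) (THf k (ξ + 2 * α))
      (2 * gammaPar k α * THf k ξ) (hT _)).comp Filter.tendsto_neg_atBot_atTop
    refine h.congr fun η => ?_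
    simp only [Function.comp, Fquot, mul_neg, neg_neg]
    congr 2 <;> ring


end
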